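/- Let (N, B, L) be a Hadamard triple in ℝ with #B < N, and let μ_{N,B} be the self-similar measure associated with (N,B), i.e., the unique Borel probability measure μ on ℝ satisfying μ = (1/#B) ∑_{b∈B} μ ∘ τ_b^{-1} where τ_b(x) = (x+b)/N. Let E_N = { v/u : u, v ∈ ℕ, gcd(u,v) = 1, gcd(uv, N) = 1 }. Then for any t_1, t_2, …, t_k ∈ E_N, the collection of sets { Λ ⊂ ℝ : 0 ∈ Λ, and Λ, t_1·Λ, t_2·Λ, …, t_k·Λ are all spectra of μ_{N,B} } is infinite. -/

import Mathlib

open MeasureTheory ENNReal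

/-- `(N,B,L)` is a Hadamard triple in `ℝ`. -/
def IsHadamardTriple (N : ℕ) (B L : Finset ℤ) : Prop :=
  2 ≤ N ∧ 2 ≤ B.card ∧ B.card = L.card ∧
    ∀ l ∈ L, ∀ l' ∈ L, l ≠ l' →
      ∑ b ∈ B, Complex.exp (2 * Real.pi * Complex.I * (b : ℂ) * ((l : ℂ) - (l' : ℂ)) / (N : ℂ)) = 0

/-- The exponential function `e_λ(x) = e^{2πiλx}`. -/
noncomputable def expFun (l : ℝ) : ℝ → ℂ :=
  fun x => Complex.exp (2 * Real.pi * Complex.I * (l : ℂ) * (x : ℂ))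

/-- `Λ` is a spectrum of `μ`: the family `{e^{2πiλx} : λ ∈ Λ}` forms an
orthonormal basis of `L²(μ)`. -/
def IsSpectrum (μ : Measure ℝ) (Λ : Set ℝ) : Prop :=
  ∃ F : Λ → Lp ℂ 2 μ,
    (∀ l : Λ, (F l : ℝ → ℂ) =ᵐ[μ] expFun (l : ℝ)) ∧
    Orthonormal ℂ F ∧
    (Submodule.span ℂ (Set.range F)).topologicalClosure = ⊤

/-- The set `E_N` of quotients `v/u` of coprime positive integers with `uv` coprime to `N`. -/
def eigenSet (N : ℕ) : Set ℝ :=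
  { t : ℝ | ∃ u v : ℕ, 0 < u ∧ 0 < v ∧ Nat.Coprime u v ∧ Nat.Coprime (u * v) N ∧
      t = (v : ℝ) / (u : ℝ) }

/-!
If `w` is coprime to `N`, the Galois conjugation `ζ ↦ ζ ^ w` of `N`-th roots of unity shows that
`(N, wB, L)` is again a Hadamard triple. Hence one increasing tower of finite sets `A n` can serve
as level spectra for all dilates `wB` at once. The transforms of the dilated measures are
equi-positive because `#B < N` excludes a common zero of all their integer translates, so the
elements of `A n` can be moved within their residue classes until the remaining tail of the
transform is bounded below; cycling through the countably many `w` achieves this infinitely often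
for each. Parseval's identity then passes to the limit `Λ = ⋃ A n` and makes every `w • Λ` with `w`
coprime to `N` a spectrum. With `d` a common denominator of the `t i`, the sets `(d * q) • Λ` with
`q` coprime to `N` have the required property and are infinitely many.
-/

section

open Filter Topology
open scoped FourierTransform Real

lemma aeval_pow_eq_zero_of_coprime {K : Type*} [Field K] [CharZero K] {ζ : K} {N w : ℕ}
    (hζ : IsPrimitiveRoot ζ N) (hN : N ≠ 0) (hw : w.Coprime N) {p : Polynomial ℤ}
    (hp : Polynomial.aeval ζ p = 0) : Polynomial.aeval (ζ ^ w) p = 0 := by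
  have hdvd := minpoly.isIntegrallyClosed_dvd (hζ.isIntegral (Nat.pos_of_ne_zero hN)) hp
  rw [hζ.minpoly_eq_pow_coprime hw] at hdvd
  obtain ⟨q, rfl⟩ := hdvd
  simp

lemma sum_pow_zpow_eq_zero_of_coprime {K ι : Type*} [Field K] [CharZero K] {ζ : K} {N w : ℕ}
    (hζ : IsPrimitiveRoot ζ N) (hN : N ≠ 0) (hw : w.Coprime N) (s : Finset ι) (g : ι → ℤ)
    (h : ∑ i ∈ s, ζ ^ g i = 0) : ∑ i ∈ s, (ζ ^ w) ^ g i = 0 := by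
  have zpow_eq : ∀ ξ : K, ξ ^ N = 1 → ∀ z : ℤ, ξ ^ z = ξ ^ (z % N).toNat := by
    intro ξ hξ z
    have hξ0 : ξ ≠ 0 := by rintro rfl; simp [hN] at hξ
    rw [← zpow_natCast, Int.toNat_of_nonneg (Int.emod_nonneg _ (mod_cast hN))]
    conv_lhs => rw [← Int.emod_add_mul_ediv z N]
    rw [zpow_add₀ hξ0, zpow_mul, zpow_natCast, hξ, one_zpow, mul_one]
  let p : Polynomial ℤ := ∑ i ∈ s, Polynomial.X ^ (g i % N).toNat
  have aeval_p : ∀ ξ : K, ξ ^ N = 1 → Polynomial.aeval ξ p = ∑ i ∈ s, ξ ^ g i := by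
    intro ξ hξ
    simp only [p, map_sum, map_pow, Polynomial.aeval_X, zpow_eq ξ hξ]
  rw [← aeval_p ζ hζ.pow_eq_one] at h
  rw [← aeval_p (ζ ^ w) (by rw [pow_right_comm, hζ.pow_eq_one, one_pow])]
  exact aeval_pow_eq_zero_of_coprime hζ hN hw h

lemma fourierChar_add (x y : ℝ) : (𝐞 (x + y) : ℂ) = 𝐞 x * 𝐞 y := by
  rw [AddChar.map_add_eq_mul, Circle.coe_mul]

lemma fourierChar_intCast (n : ℤ) : (𝐞 (n : ℝ) : ℂ) = 1 := by
  rw [Real.fourierChar_apply, Complex.exp_eq_one_iff]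
  exact ⟨n, by push_cast; ring⟩

lemma fourierChar_intCast_div (N : ℕ) (z : ℤ) : (𝐞 (z / N : ℝ) : ℂ) = 𝐞 (1 / N : ℝ) ^ z := by
  rw [← Circle.coe_zpow, ← AddChar.map_zsmul_eq_zpow, zsmul_eq_mul, mul_one_div]

lemma isPrimitiveRoot_fourierChar_one_div {N : ℕ} (hN : N ≠ 0) :
    IsPrimitiveRoot (𝐞 (1 / N : ℝ) : ℂ) N := by
  convert Complex.isPrimitiveRoot_exp N hN using 1
  rw [Real.fourierChar_apply]
  congr 1
  push_cast
  ring

lemma expFun_eq_fourierChar (l x : ℝ) : expFun l x = 𝐞 (l * x) := by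
  rw [expFun, Real.fourierChar_apply]
  congr 1
  push_cast
  ring

/-- The mask polynomial `m_B(x) = (1/#B) ∑_{b ∈ B} e^{2πibx}` of a digit set `B`, i.e. the Fourier
transform of the uniform probability measure on `B`. -/
noncomputable def mask (B : Finset ℤ) (x : ℝ) : ℂ := (B.card : ℂ)⁻¹ * ∑ b ∈ B, (𝐞 (b * x) : ℂ)

lemma mask_zero {B : Finset ℤ} (hB : B.Nonempty) : mask B 0 = 1 := by
  simp [mask, hB.ne_empty]

lemma mask_add_intCast (B : Finset ℤ) (x : ℝ) (n : ℤ) : mask B (x + n) = mask B x := by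
  have h (b : ℤ) : (𝐞 (b * (x + n)) : ℂ) = 𝐞 (b * x) := by
    rw [mul_add, fourierChar_add, ← Int.cast_mul, fourierChar_intCast, mul_one]
  simp only [mask, h]

lemma mask_image_mul {w : ℤ} (hw : w ≠ 0) (B : Finset ℤ) (x : ℝ) :
    mask (B.image (w * ·)) x = mask B (w * x) := by
  have hinj : Function.Injective (w * · : ℤ → ℤ) := mul_right_injective₀ hw
  simp only [mask, Finset.card_image_of_injective _ hinj, Finset.sum_image hinj.injOn,
    Int.cast_mul, mul_left_comm, mul_assoc]

lemma analyticOnNhd_mask (B : Finset ℤ) : AnalyticOnNhd ℝ (mask B) Set.univ := by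
  intro x _
  refine analyticAt_const.mul (Finset.analyticAt_fun_sum _ fun b _ => ?_)
  simp only [Real.fourierChar_apply]
  refine (analyticAt_cexp.restrictScalars (𝕜 := ℝ)).comp (AnalyticAt.mul ?_ analyticAt_const)
  exact (Complex.ofRealCLM.analyticAt _).comp (f := fun y : ℝ => 2 * Real.pi * (b * y))
    (by fun_prop)

/-- The unit vector `(e^{2πibx} / √#B)_{b ∈ B}`, a normalised row of a Hadamard matrix. -/
noncomputable def expVec (B : Finset ℤ) (x : ℝ) : EuclideanSpace ℂ B :=
  WithLp.toLp 2 fun b => 𝐞 (b * x) / (√B.card : ℂ)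

lemma inner_expVec (B : Finset ℤ) (x y : ℝ) :
    inner ℂ (expVec B x) (expVec B y) = mask B (y - x) := by
  have hsqrt : (√B.card : ℂ) * √B.card = B.card := by
    rw [← Complex.ofReal_mul, Real.mul_self_sqrt (Nat.cast_nonneg _), Complex.ofReal_natCast]
  have hterm (b : ℤ) :
      inner ℂ ((𝐞 (b * x) : ℂ) / (√B.card : ℂ)) ((𝐞 (b * y) : ℂ) / (√B.card : ℂ)) =
        (B.card : ℂ)⁻¹ * 𝐞 (b * (y - x)) := by
    rw [RCLike.inner_apply, map_div₀, Complex.conj_ofReal, ← Circle.coe_inv_eq_conj,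
      ← AddChar.map_neg_eq_inv, div_mul_div_comm, hsqrt, ← fourierChar_add, div_eq_inv_mul]
    ring_nf
  simp only [PiLp.inner_apply, expVec, hterm]
  rw [← Finset.mul_sum, Finset.sum_coe_sort B fun b => (𝐞 (b * (y - x)) : ℂ), mask]

lemma norm_expVec {B : Finset ℤ} (hB : B.Nonempty) (x : ℝ) : ‖expVec B x‖ = 1 := by
  rw [← sq_eq_sq₀ (norm_nonneg _) zero_le_one, norm_sq_eq_re_inner (𝕜 := ℂ), inner_expVec,
    sub_self, mask_zero hB]
  simp

lemma isHadamardTriple_iff_sum_fourierChar {N : ℕ} {B L : Finset ℤ} :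
    IsHadamardTriple N B L ↔ 2 ≤ N ∧ 2 ≤ B.card ∧ B.card = L.card ∧
      ∀ l ∈ L, ∀ l' ∈ L, l ≠ l' → ∑ b ∈ B, (𝐞 ((b * (l - l') : ℤ) / N : ℝ) : ℂ) = 0 := by
  have hexp (b l l' : ℤ) : (𝐞 ((b * (l - l') : ℤ) / N : ℝ) : ℂ) =
      Complex.exp (2 * π * Complex.I * (b : ℂ) * ((l : ℂ) - (l' : ℂ)) / (N : ℂ)) := by
    rw [Real.fourierChar_apply]
    congr 1
    push_cast
    ring
  simp only [IsHadamardTriple, hexp]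

namespace IsHadamardTriple

variable {N : ℕ} {B L : Finset ℤ}

lemma two_le (h : IsHadamardTriple N B L) : 2 ≤ N := h.1

lemma ne_zero (h : IsHadamardTriple N B L) : N ≠ 0 := by have := h.1; omega

lemma two_le_card_left (h : IsHadamardTriple N B L) : 2 ≤ B.card := h.2.1

lemma card_eq (h : IsHadamardTriple N B L) : B.card = L.card := h.2.2.1

lemma nonempty_left (h : IsHadamardTriple N B L) : B.Nonempty := by
  rw [← Finset.card_pos]; have := h.two_le_card_left; omega

lemma nonempty_right (h : IsHadamardTriple N B L) : L.Nonempty := by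
  rw [← Finset.card_pos]; have := h.two_le_card_left; have := h.card_eq; omega

lemma sum_fourierChar_eq_zero (h : IsHadamardTriple N B L) {l l' : ℤ} (hl : l ∈ L) (hl' : l' ∈ L)
    (hne : l ≠ l') : ∑ b ∈ B, (𝐞 ((b * (l - l') : ℤ) / N : ℝ) : ℂ) = 0 :=
  (isHadamardTriple_iff_sum_fourierChar.1 h).2.2.2 l hl l' hl' hne

lemma natCast_ne_zero (h : IsHadamardTriple N B L) {w : ℕ} (hw : w.Coprime N) : (w : ℤ) ≠ 0 := by
  have := h.two_le
  rintro hw0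
  simp_all [Nat.coprime_zero_left]

lemma image_mul_left (h : IsHadamardTriple N B L) {w : ℕ} (hw : w.Coprime N) :
    IsHadamardTriple N (B.image ((w : ℤ) * ·)) L := by
  have hinj : Function.Injective ((w : ℤ) * · : ℤ → ℤ) :=
    mul_right_injective₀ (h.natCast_ne_zero hw)
  have hcard : (B.image ((w : ℤ) * ·)).card = B.card := Finset.card_image_of_injective _ hinj
  refine isHadamardTriple_iff_sum_fourierChar.2 ⟨h.two_le, hcard ▸ h.two_le_card_left,
    hcard.trans h.card_eq, fun l hl l' hl' hne => ?_⟩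
  have hsum := h.sum_fourierChar_eq_zero hl hl' hne
  simp only [fourierChar_intCast_div] at hsum
  rw [Finset.sum_image hinj.injOn]
  simp only [fourierChar_intCast_div, mul_assoc, zpow_mul _ (w : ℤ), zpow_natCast]
  exact sum_pow_zpow_eq_zero_of_coprime (isPrimitiveRoot_fourierChar_one_div h.ne_zero) h.ne_zero
    hw B _ hsum

lemma image_sub_right (h : IsHadamardTriple N B L) (c : ℤ) :
    IsHadamardTriple N B (L.image (· - c)) := by
  refine isHadamardTriple_iff_sum_fourierChar.2 ⟨h.two_le, h.two_le_card_left,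
    h.card_eq.trans (Finset.card_image_of_injective _ sub_left_injective).symm, ?_⟩
  simp only [Finset.forall_mem_image]
  intro l hl l' hl' hne
  rw [sub_sub_sub_cancel_right]
  exact h.sum_fourierChar_eq_zero hl hl' (by rintro rfl; exact hne rfl)

lemma exists_zero_mem (h : IsHadamardTriple N B L) :
    ∃ L' : Finset ℤ, 0 ∈ L' ∧ IsHadamardTriple N B L' := by
  obtain ⟨c, hc⟩ := h.nonempty_right
  exact ⟨L.image (· - c), Finset.mem_image.2 ⟨c, hc, sub_self c⟩, h.image_sub_right c⟩

lemma mask_eq_zero (h : IsHadamardTriple N B L) {l l' : ℤ} (hl : l ∈ L) (hl' : l' ∈ L)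
    (hne : l ≠ l') : mask B ((l - l') / N) = 0 := by
  rw [mask, ← mul_zero (B.card : ℂ)⁻¹, ← h.sum_fourierChar_eq_zero hl hl' hne]
  refine congrArg _ (Finset.sum_congr rfl fun b _ => ?_)
  push_cast
  rw [mul_div_assoc]

lemma orthonormal_expVec (h : IsHadamardTriple N B L) :
    Orthonormal ℂ fun l : L => expVec B (-(l / N)) := by
  refine ⟨fun l => norm_expVec h.nonempty_left _, fun l l' hne => ?_⟩
  dsimp only
  rw [inner_expVec, ← h.mask_eq_zero l.2 l'.2 (Subtype.coe_injective.ne hne)]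
  ring_nf

lemma sum_norm_mask_sq (h : IsHadamardTriple N B L) (x : ℝ) :
    ∑ l ∈ L, ‖mask B (x + l / N)‖ ^ 2 = 1 := by
  have hon := h.orthonormal_expVec
  have hspan := hon.linearIndependent.span_eq_top_of_card_eq_finrank'
    (by simp [h.card_eq])
  have hparseval := (OrthonormalBasis.mk hon hspan.ge).sum_sq_norm_inner_right (expVec B x)
  simpa [inner_expVec, norm_expVec h.nonempty_left,
    Finset.sum_attach L fun l => ‖mask B (x + l / N)‖ ^ 2] using hparseval

lemma exists_mask_ne_zero (h : IsHadamardTriple N B L) (x : ℝ) :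
    ∃ l ∈ L, mask B (x + l / N) ≠ 0 := by
  have hsum := h.sum_norm_mask_sq x
  by_contra! hzero
  rw [Finset.sum_eq_zero fun l hl => by simp [hzero l hl]] at hsum
  exact zero_ne_one hsum

end IsHadamardTriple

/-- The partial products `∏_{1 ≤ j ≤ K} m_B(N^{-j} x)`, the Fourier transform of the `K`-th discrete
approximation of the self-similar measure of `(N, B)`. -/
noncomputable def maskProd (N : ℕ) (B : Finset ℤ) (K : ℕ) (x : ℝ) : ℂ :=
  ∏ j ∈ Finset.range K, mask B (x / N ^ (j + 1))

lemma maskProd_zero {B : Finset ℤ} (hB : B.Nonempty) (N K : ℕ) : maskProd N B K 0 = 1 := by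
  simp [maskProd, mask_zero hB]

lemma maskProd_succ (N : ℕ) (B : Finset ℤ) (K : ℕ) (x : ℝ) :
    maskProd N B (K + 1) x = maskProd N B K x * mask B (x / N ^ (K + 1)) :=
  Finset.prod_range_succ _ _

lemma maskProd_add {N : ℕ} (hN : N ≠ 0) (B : Finset ℤ) (K : ℕ) (x : ℝ) (n : ℤ) :
    maskProd N B K (x + N ^ K * n) = maskProd N B K x := by
  refine Finset.prod_congr rfl fun j hj => ?_
  obtain ⟨d, rfl⟩ := Nat.exists_eq_add_of_le (Finset.mem_range.1 hj)
  have : (N : ℝ) ≠ 0 := mod_cast hN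
  have hshift : (x + N ^ (j + 1 + d) * n) / (N : ℝ) ^ (j + 1) =
      x / N ^ (j + 1) + ((N ^ d * n : ℤ) : ℝ) := by
    push_cast
    field_simp
    ring
  rw [hshift, mask_add_intCast]

lemma analyticOnNhd_maskProd (N : ℕ) (B : Finset ℤ) (K : ℕ) :
    AnalyticOnNhd ℝ (maskProd N B K) Set.univ := fun _ _ =>
  Finset.analyticAt_fun_prod _ fun j _ =>
    (analyticOnNhd_mask B _ (Set.mem_univ _)).comp (f := fun y : ℝ => y / N ^ (j + 1))
      (analyticAt_id.div_const)

lemma tendsto_div_pow_atTop_nhds_zero {r : ℝ} (hr : 1 < r) (x : ℝ) :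
    Tendsto (fun K : ℕ => x / r ^ K) atTop (𝓝 0) :=
  tendsto_const_nhds.div_atTop (tendsto_pow_atTop_atTop_of_one_lt hr)

/-- A continuous solution `f` of the refinement equation `f(x) = m_B(x/N) f(x/N)` normalised by
`f(0) = 1`. The Fourier transform of the self-similar measure of `(N, B)` is one. -/
structure IsRefinable (N : ℕ) (B : Finset ℤ) (f : ℝ → ℂ) : Prop where
  continuous : Continuous f
  map_zero : f 0 = 1
  map_eq : ∀ x, f x = mask B (x / N) * f (x / N)

namespace IsRefinable

variable {N : ℕ} {B : Finset ℤ} {f : ℝ → ℂ}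

lemma nonempty (hf : IsRefinable N B f) : B.Nonempty := by
  by_contra! hB
  have h := hf.map_eq 0
  simp [hf.map_zero, hB, mask] at h

lemma eq_maskProd_mul (hf : IsRefinable N B f) (K : ℕ) (x : ℝ) :
    f x = maskProd N B K x * f (x / N ^ K) := by
  induction K with
  | zero => simp [maskProd]
  | succ K ih => rw [ih, maskProd_succ, hf.map_eq (x / N ^ K), div_div, ← pow_succ, mul_assoc]

lemma comp_mul (hf : IsRefinable N B f) {w : ℤ} (hw : w ≠ 0) :
    IsRefinable N (B.image (w * ·)) fun x => f (w * x) where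
  continuous := hf.continuous.comp (continuous_const_mul _)
  map_zero := by rw [mul_zero, hf.map_zero]
  map_eq x := by rw [mask_image_mul hw, hf.map_eq, mul_div_assoc]

lemma eventually_ne_zero (hf : IsRefinable N B f) : ∀ᶠ x in 𝓝 0, f x ≠ 0 :=
  hf.continuous.continuousAt.eventually_ne (by rw [hf.map_zero]; exact one_ne_zero)

lemma tendsto_maskProd (hf : IsRefinable N B f) (hN : 1 < N) (x : ℝ) :
    Tendsto (fun K => maskProd N B K x) atTop (𝓝 (f x)) := by
  have hdiv := tendsto_div_pow_atTop_nhds_zero (r := N) (mod_cast hN) x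
  have hlim : Tendsto (fun K : ℕ => f (x / N ^ K)) atTop (𝓝 1) :=
    hf.map_zero ▸ (hf.continuous.tendsto 0).comp hdiv
  have hquot : Tendsto (fun K : ℕ => f x / f (x / N ^ K)) atTop (𝓝 (f x)) := by
    simpa [Pi.div_def] using Tendsto.div (f := fun _ => f x) tendsto_const_nhds hlim one_ne_zero
  refine hquot.congr' ?_
  filter_upwards [hdiv.eventually hf.eventually_ne_zero] with K hK
  rw [div_eq_iff hK, ← hf.eq_maskProd_mul]

-- Near `0` the factor `f (x / N ^ p)` has no zeros, so the zeros of `f` in a bounded set are zeros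
-- of the analytic function `maskProd N B p`.
lemma finite_zeros (hf : IsRefinable N B f) (hN : 1 < N) {s : Set ℝ} (hs : IsCompact s) :
    {x ∈ s | f x = 0}.Finite := by
  obtain ⟨δ, hδ, hball⟩ := Metric.eventually_nhds_iff.1 hf.eventually_ne_zero
  obtain ⟨R, hR⟩ := hs.isBounded.exists_norm_le
  obtain ⟨p, hp⟩ := ((tendsto_div_pow_atTop_nhds_zero (r := N) (mod_cast hN) R).eventually_lt_const
    hδ).exists
  have hcodiscrete := (analyticOnNhd_maskProd N B p).preimage_zero_mem_codiscrete (x := 0)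
    (by simp [maskProd_zero hf.nonempty])
  refine (hs.finite_sdiff_of_mem_codiscreteWithin
    (Filter.codiscreteWithin_mono (Set.subset_univ s) hcodiscrete)).subset ?_
  rintro x ⟨hxs, hx⟩
  rw [hf.eq_maskProd_mul p, mul_eq_zero] at hx
  refine ⟨hxs, fun h => h (hx.resolve_right (hball ?_))⟩
  rw [dist_zero_right, norm_div, norm_pow, RCLike.norm_natCast]
  exact (by gcongr; exact hR x hxs : _ ≤ R / (N : ℝ) ^ p).trans_lt hp

end IsRefinable

lemma eq_empty_of_forall_exists_ne_map_eq {α : Type*} {s : Set α} (hs : s.Finite) (φ : α → α)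
    (h : ∀ z ∈ s, ∃ y₁ ∈ s, ∃ y₂ ∈ s, y₁ ≠ y₂ ∧ φ y₁ = z ∧ φ y₂ = z) : s = ∅ := by
  classical
  lift s to Finset α using hs
  simp only [Finset.mem_coe, Finset.coe_eq_empty] at *
  have hsurj : Set.SurjOn φ ↑(s.filter (φ · ∈ s)) s := by
    intro z hz
    obtain ⟨y, hy, -, -, -, hyz, -⟩ := h z hz
    exact ⟨y, Finset.mem_filter.2 ⟨hy, hyz ▸ hz⟩, hyz⟩
  have hinj := Finset.injOn_of_surjOn_of_card_le φ (fun y hy => (Finset.mem_filter.1 hy).2) hsurj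
    (Finset.card_filter_le _ _)
  refine Finset.eq_empty_of_forall_notMem fun z hz => ?_
  obtain ⟨y₁, hy₁, y₂, hy₂, hne, rfl, heq⟩ := h z hz
  exact hne (hinj (Finset.mem_filter.2 ⟨hy₁, hz⟩) (Finset.mem_filter.2 ⟨hy₂, heq ▸ hz⟩) heq.symm)

lemma exists_intCast_notMem_image {N : ℕ} [NeZero N] {L : Finset ℤ} (hL : L.card < N) :
    ∃ q : ℤ, ∀ l ∈ L, (l : ZMod N) ≠ q := by
  have hcard : (L.image (Int.cast : ℤ → ZMod N)).card < (Finset.univ : Finset (ZMod N)).card :=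
    Finset.card_image_le.trans_lt (by rwa [Finset.card_univ, ZMod.card])
  obtain ⟨q, -, hq⟩ := Finset.exists_mem_notMem_of_card_lt_card hcard
  obtain ⟨q, rfl⟩ := ZMod.intCast_surjective q
  exact ⟨q, fun l hl hlq => hq (Finset.mem_image.2 ⟨l, hl, hlq⟩)⟩

lemma fract_add_intCast_div_ne {N : ℕ} (hN : N ≠ 0) {x : ℝ} {i j : ℤ} (hij : (i : ZMod N) ≠ j) :
    Int.fract ((x + i) / N) ≠ Int.fract ((x + j) / N) := by
  intro heq
  obtain ⟨z, hz⟩ := Int.fract_eq_fract.1 heq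
  have : (N : ℝ) ≠ 0 := mod_cast hN
  have hreal : (i : ℝ) = j + N * z := by
    rw [← hz]
    field_simp
    ring
  have hint : i = j + N * z := by exact_mod_cast hreal
  exact hij (by rw [hint]; simp)

lemma fract_natCast_mul_fract_div {N : ℕ} (hN : N ≠ 0) {x : ℝ} (hx : x ∈ Set.Ico (0 : ℝ) 1)
    (j : ℤ) : Int.fract (N * Int.fract ((x + j) / N)) = x := by
  have : (N : ℝ) ≠ 0 := mod_cast hN
  have heq : N * Int.fract ((x + j) / N) = x + (j - N * ⌊(x + j) / N⌋ : ℤ) := by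
    rw [← Int.self_sub_floor]
    push_cast
    field_simp
    ring
  rw [heq, Int.fract_add_intCast, Int.fract_eq_self.2 hx]

lemma IsHadamardTriple.exists_mask_ne_zero_of_ne {N : ℕ} {B L : Finset ℤ}
    (h : IsHadamardTriple N B L) (hBN : B.card < N) (x : ℝ) (r : ℤ) :
    ∃ j : ℤ, (j : ZMod N) ≠ r ∧ mask B ((x + j) / N) ≠ 0 := by
  have : NeZero N := ⟨h.ne_zero⟩
  obtain ⟨q, hq⟩ := exists_intCast_notMem_image (h.card_eq ▸ hBN)
  obtain ⟨l, hl, hne⟩ := h.exists_mask_ne_zero ((x + (r - q : ℤ)) / N)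
  refine ⟨l + (r - q), fun hj => hq l hl ?_, ?_⟩
  · push_cast at hj
    linear_combination hj
  · rwa [← add_div, add_assoc, ← Int.cast_add, add_comm (r - q)] at hne

namespace IsRefinable

variable {N : ℕ} {B L : Finset ℤ} {f : ℝ → ℂ}

lemma map_div_add_intCast_eq_zero (hf : IsRefinable N B f) (hN : N ≠ 0) {x : ℝ} {j : ℤ}
    (hx : ∀ k : ℤ, f (x + k) = 0) (hj : mask B ((x + j) / N) ≠ 0) (k : ℤ) :
    f ((x + j) / N + k) = 0 := by
  have : (N : ℝ) ≠ 0 := mod_cast hN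
  have hsplit : (x + (j + N * k : ℤ)) / N = (x + j) / N + k := by
    push_cast
    field_simp
    ring
  have h := hx (j + N * k)
  rw [hf.map_eq, hsplit, mask_add_intCast] at h
  exact (mul_eq_zero.1 h).resolve_left hj

-- The common zeros in `[0, 1)` of all integer translates of `f` form a finite set in which every
-- point `x` has two preimages `(x + j) / N mod 1` under multiplication by `N`.
lemma exists_map_add_intCast_ne_zero (hf : IsRefinable N B f) (h : IsHadamardTriple N B L)
    (hBN : B.card < N) (x : ℝ) : ∃ k : ℤ, f (x + k) ≠ 0 := by
  let Z : Set ℝ := {x | x ∈ Set.Ico 0 1 ∧ ∀ k : ℤ, f (x + k) = 0}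
  have fract_mem : ∀ y, (∀ k : ℤ, f (y + k) = 0) → Int.fract y ∈ Z := fun y hy =>
    ⟨⟨Int.fract_nonneg y, Int.fract_lt_one y⟩, fun k => by
      simpa [← Int.self_sub_floor, sub_add_eq_add_sub, add_sub_assoc] using hy (k - ⌊y⌋)⟩
  have Z_finite : Z.Finite := (hf.finite_zeros h.two_le (isCompact_Icc (a := 0) (b := 1))).subset
    fun y hy => ⟨Set.Ico_subset_Icc_self hy.1, by simpa using hy.2 0⟩
  have Z_empty : Z = ∅ := by
    refine eq_empty_of_forall_exists_ne_map_eq Z_finite (fun y => Int.fract (N * y)) ?_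
    rintro z ⟨hz, hfz⟩
    obtain ⟨i, -, hi⟩ := h.exists_mask_ne_zero_of_ne hBN z 0
    obtain ⟨j, hji, hj⟩ := h.exists_mask_ne_zero_of_ne hBN z i
    exact ⟨_, fract_mem _ (hf.map_div_add_intCast_eq_zero h.ne_zero hfz hj),
      _, fract_mem _ (hf.map_div_add_intCast_eq_zero h.ne_zero hfz hi),
      fract_add_intCast_div_ne h.ne_zero hji, fract_natCast_mul_fract_div h.ne_zero hz j,
      fract_natCast_mul_fract_div h.ne_zero hz i⟩
  by_contra! hzero
  exact Set.notMem_empty _ (Z_empty ▸ fract_mem x hzero)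

end IsRefinable

/-- Equi-positivity: the modulus of `g` is at least `c` on the `δ`-neighbourhood of some integer
translate of every point `x`, and the translation can be taken trivial for `x` near `0`. -/
def IsEquiPositive (g : ℝ → ℂ) (δ c : ℝ) : Prop :=
  ∀ x, ∃ k : ℤ, (|x| < δ → k = 0) ∧ ∀ y, |y| < δ → c ≤ ‖g (x + k + y)‖

section EquiPositive

variable {g : ℝ → ℂ}

lemma exists_Icc_subset_iUnion_lt_norm (hg : Continuous g) (h : ∀ x, ∃ k : ℤ, g (x + k) ≠ 0) :
    ∃ c > 0, Set.Icc 0 1 ⊆ ⋃ k : ℤ, {x : ℝ | c < ‖g (x + k)‖} := by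
  let U (n : ℕ) : Set ℝ := ⋃ k : ℤ, {x : ℝ | 1 / ((n : ℝ) + 1) < ‖g (x + k)‖}
  have U_open (n : ℕ) : IsOpen (U n) := isOpen_iUnion fun k => isOpen_lt (by fun_prop) (by fun_prop)
  have U_mono : Monotone U := fun m n hmn => Set.iUnion_mono fun k x hx =>
    (one_div_le_one_div_of_le (by positivity) (by gcongr) : _ ≤ 1 / ((m : ℝ) + 1)).trans_lt hx
  have U_cover : Set.Icc 0 1 ⊆ ⋃ n, U n := fun x _ => by
    obtain ⟨k, hk⟩ := h x
    obtain ⟨n, hn⟩ := exists_nat_one_div_lt (norm_pos_iff.2 hk)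
    exact Set.mem_iUnion₂.2 ⟨n, k, hn⟩
  obtain ⟨n, hn⟩ := isCompact_Icc.elim_directed_cover U U_open U_cover
    U_mono.directed_le
  exact ⟨_, by positivity, hn⟩

lemma exists_forall_exists_le_norm (hg : Continuous g) (h : ∀ x, ∃ k : ℤ, g (x + k) ≠ 0) :
    ∃ δ > 0, ∃ c > 0, ∀ x, ∃ k : ℤ, ∀ y, |y| < δ → c ≤ ‖g (x + k + y)‖ := by
  obtain ⟨c, hc, hcover⟩ := exists_Icc_subset_iUnion_lt_norm hg h
  obtain ⟨δ, hδ, hball⟩ := lebesgue_number_lemma_of_metric isCompact_Icc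
    (fun k : ℤ => isOpen_lt continuous_const (by fun_prop)) hcover
  refine ⟨δ, hδ, c, hc, fun x => ?_⟩
  obtain ⟨k, hk⟩ := hball (Int.fract x) ⟨Int.fract_nonneg x, (Int.fract_lt_one x).le⟩
  refine ⟨k - ⌊x⌋, fun y hy => ?_⟩
  have hlt : c < ‖g (Int.fract x + y + k)‖ := hk (by simpa using hy)
  have hshift : Int.fract x + y + k = x + (k - ⌊x⌋ : ℤ) + y := by
    rw [← Int.self_sub_floor]
    push_cast
    ring
  exact hshift ▸ hlt.le

lemma exists_isEquiPositive (hg : Continuous g) (h0 : g 0 ≠ 0)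
    (h : ∀ x, ∃ k : ℤ, g (x + k) ≠ 0) : ∃ δ > 0, ∃ c > 0, IsEquiPositive g δ c := by
  obtain ⟨δ₁, hδ₁, c₁, hc₁, h₁⟩ := exists_forall_exists_le_norm hg h
  obtain ⟨δ₀, hδ₀, h₀⟩ := Metric.eventually_nhds_iff.1
    (hg.norm.continuousAt.eventually_const_le (half_lt_self (norm_pos_iff.2 h0)))
  refine ⟨min δ₁ (δ₀ / 2), by positivity, min c₁ (‖g 0‖ / 2), by positivity, fun x => ?_⟩
  by_cases hx : |x| < min δ₁ (δ₀ / 2)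
  · refine ⟨0, fun _ => rfl, fun y hy => min_le_of_right_le (h₀ ?_)⟩
    rw [lt_min_iff] at hx hy
    rw [Int.cast_zero, add_zero, dist_zero_right, Real.norm_eq_abs]
    linarith [abs_add_le x y]
  · obtain ⟨k, hk⟩ := h₁ x
    exact ⟨k, fun h => absurd h hx, fun y hy => min_le_of_left_le (hk y (lt_min_iff.1 hy).1)⟩

end EquiPositive

/-- `A` is a spectrum of the `K`-th discrete approximation of the self-similar measure of `(N, B)`,
expressed as Parseval's identity `∑_{a ∈ A} |∏_{1 ≤ j ≤ K} m_B(N^{-j}(ξ + a))|² = 1`. -/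
def IsLevelSpectrum (N : ℕ) (B : Finset ℤ) (K : ℕ) (A : Finset ℤ) : Prop :=
  ∀ ξ : ℝ, ∑ a ∈ A, ‖maskProd N B K (ξ + a)‖ ^ 2 = 1

lemma IsHadamardTriple.isLevelSpectrum_one {N : ℕ} {B L : Finset ℤ} (h : IsHadamardTriple N B L) :
    IsLevelSpectrum N B 1 L := fun ξ => by
  simpa [maskProd, add_div] using h.sum_norm_mask_sq (ξ / N)

namespace IsLevelSpectrum

variable {N K : ℕ} {B L A : Finset ℤ}

lemma maskProd_sub_eq_zero (hA : IsLevelSpectrum N B K A) (hB : B.Nonempty) {a b : ℤ}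
    (ha : a ∈ A) (hb : b ∈ A) (hab : a ≠ b) : maskProd N B K (a - b) = 0 := by
  have hsum := hA (-b)
  rw [← Finset.add_sum_erase A _ hb, neg_add_cancel, maskProd_zero hB, norm_one, one_pow,
    add_eq_left, Finset.sum_eq_zero_iff_of_nonneg fun _ _ => by positivity] at hsum
  simpa [sub_eq_neg_add] using hsum a (Finset.mem_erase.2 ⟨hab, ha⟩)

lemma eq_of_add_pow_mul_eq (hA : IsLevelSpectrum N B K A) (hN : N ≠ 0) (hB : B.Nonempty)
    {a b m n : ℤ} (ha : a ∈ A) (hb : b ∈ A) (h : a + N ^ K * m = b + N ^ K * n) :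
    a = b ∧ m = n := by
  have hab : a = b := by
    by_contra hab
    have hdiff : (a - b : ℝ) = 0 + N ^ K * (n - m : ℤ) := by
      have : (a + N ^ K * m : ℝ) = b + N ^ K * n := mod_cast h
      push_cast
      linear_combination this
    have hzero := hA.maskProd_sub_eq_zero hB ha hb hab
    rw [hdiff, maskProd_add hN, maskProd_zero hB] at hzero
    exact one_ne_zero hzero
  subst hab
  have hNK : (N : ℤ) ^ K ≠ 0 := pow_ne_zero _ (mod_cast hN)
  exact ⟨rfl, mul_left_cancel₀ hNK (add_left_cancel h)⟩

lemma image_add_pow_mul (hA : IsLevelSpectrum N B K A) (hN : N ≠ 0) (hB : B.Nonempty)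
    (k : ℤ → ℤ) : IsLevelSpectrum N B K (A.image fun a => a + N ^ K * k a) := fun ξ => by
  rw [Finset.sum_image fun a ha b hb h => (hA.eq_of_add_pow_mul_eq hN hB ha hb h).1, ← hA ξ]
  refine Finset.sum_congr rfl fun a _ => ?_
  push_cast
  rw [← add_assoc, maskProd_add hN]

lemma succ (hA : IsLevelSpectrum N B K A) (h : IsHadamardTriple N B L) :
    IsLevelSpectrum N B (K + 1) ((A ×ˢ L).image fun p => p.1 + N ^ K * p.2) := fun ξ => by
  have hN : (N : ℝ) ≠ 0 := mod_cast h.ne_zero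
  have hterm (a l : ℤ) : maskProd N B (K + 1) (ξ + (a + N ^ K * l : ℤ)) =
      maskProd N B K (ξ + a) * mask B ((ξ + a) / N ^ (K + 1) + l / N) := by
    have hdiv : (ξ + a + N ^ K * l) / (N : ℝ) ^ (K + 1) = (ξ + a) / N ^ (K + 1) + l / N := by
      field_simp
      ring
    push_cast
    rw [← add_assoc, maskProd_succ, maskProd_add h.ne_zero, hdiv]
  rw [Finset.sum_image, Finset.sum_product, ← hA ξ]
  · refine Finset.sum_congr rfl fun a _ => ?_
    simp only [hterm, norm_mul, mul_pow]
    rw [← Finset.mul_sum, h.sum_norm_mask_sq, mul_one]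
  · rintro ⟨a, l⟩ hal ⟨b, m⟩ hbm heq
    rw [Finset.mem_coe, Finset.mem_product] at hal hbm
    exact Prod.ext_iff.2 (hA.eq_of_add_pow_mul_eq h.ne_zero h.nonempty_left hal.1 hbm.1 heq)

end IsLevelSpectrum

/-- `A` is a level-`K` spectrum for all dilates `wB` with `w` coprime to `N` simultaneously. -/
def IsUniversalLevelSpectrum (N : ℕ) (B : Finset ℤ) (K : ℕ) (A : Finset ℤ) : Prop :=
  ∀ w : ℕ, w.Coprime N → IsLevelSpectrum N (B.image ((w : ℤ) * ·)) K A

/-- The factor `g(N^{-K} ·)` by which the transform of the self-similar measure differs from its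
`K`-th partial product is at least `c` in modulus on the `N^K δ`-neighbourhood of `A`. -/
def IsTailBounded (g : ℝ → ℂ) (N K : ℕ) (A : Finset ℤ) (δ c : ℝ) : Prop :=
  ∀ a ∈ A, ∀ y, |y| < δ → c ≤ ‖g (a / N ^ K + y)‖

namespace IsUniversalLevelSpectrum

variable {N K : ℕ} {B L A : Finset ℤ}

lemma image_add_pow_mul (hA : IsUniversalLevelSpectrum N B K A) (hN : N ≠ 0) (hB : B.Nonempty)
    (k : ℤ → ℤ) : IsUniversalLevelSpectrum N B K (A.image fun a => a + N ^ K * k a) :=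
  fun w hw => (hA w hw).image_add_pow_mul hN (hB.image _) k

lemma exists_superset (hA : IsUniversalLevelSpectrum N B K A) (h : IsHadamardTriple N B L)
    (h0 : 0 ∈ L) (p : ℕ) : ∃ A', A ⊆ A' ∧ IsUniversalLevelSpectrum N B (K + p) A' := by
  induction p with
  | zero => exact ⟨A, Finset.Subset.refl A, hA⟩
  | succ p ih =>
    obtain ⟨A', hAA', hA'⟩ := ih
    refine ⟨_, fun a ha => ?_, fun w hw => (hA' w hw).succ (h.image_mul_left hw)⟩
    exact Finset.mem_image.2 ⟨(a, 0), Finset.mem_product.2 ⟨hAA' ha, h0⟩, by simp⟩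

lemma exists_isTailBounded (hA : IsUniversalLevelSpectrum N B K A) (h : IsHadamardTriple N B L)
    (h0 : 0 ∈ L) {g : ℝ → ℂ} {δ c : ℝ} (hδ : 0 < δ) (hg : IsEquiPositive g δ c) :
    ∃ K' A', K < K' ∧ A ⊆ A' ∧ IsUniversalLevelSpectrum N B K' A' ∧
      IsTailBounded g N K' A' δ c := by
  have hN1 : (1 : ℝ) < N := mod_cast h.two_le
  have hsmall : ∀ᶠ n : ℕ in atTop, ∀ a ∈ A, |(a / N ^ n : ℝ)| < δ := by
    refine (Filter.eventually_all_finset A).2 fun a _ => ?_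
    exact ((tendsto_div_pow_atTop_nhds_zero hN1 a).abs).eventually_lt_const (by simpa)
  obtain ⟨n, hn, hKn⟩ := (hsmall.and (eventually_gt_atTop K)).exists
  obtain ⟨p, rfl⟩ := Nat.exists_eq_add_of_lt hKn
  obtain ⟨A₁, hAA₁, hA₁⟩ := hA.exists_superset h h0 (p + 1)
  rw [← add_assoc] at hA₁
  choose k hk0 hk using hg
  refine ⟨_, _, hKn, fun a ha => ?_, hA₁.image_add_pow_mul h.ne_zero h.nonempty_left
    fun a => k (a / N ^ (K + p + 1)), ?_⟩
  · exact Finset.mem_image.2 ⟨a, hAA₁ ha, by simp [hk0 _ (hn a ha)]⟩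
  · simp only [IsTailBounded, Finset.forall_mem_image]
    intro a _ y hy
    have hNK : (N : ℝ) ^ (K + p + 1) ≠ 0 := by positivity
    push_cast
    rw [add_div, mul_div_cancel_left₀ _ hNK]
    exact hk _ y hy

end IsUniversalLevelSpectrum

-- Fatou bounds the finite partial sums of `g`, hence `g` is summable; dominated convergence along
-- the indices where the domination holds then identifies the sum.
lemma hasSum_of_tendsto_of_frequently_le {α ι : Type*} {l : Filter α} {G : α → ι → ℝ} {g : ι → ℝ}
    {s C : ℝ} (hG : ∀ n i, 0 ≤ G n i) (hsum : ∀ n, HasSum (G n) s)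
    (hlim : ∀ i, Tendsto (G · i) l (𝓝 (g i))) (hle : ∃ᶠ n in l, ∀ i, G n i ≤ C * g i) :
    HasSum g s := by
  have hne : (l ⊓ 𝓟 {n | ∀ i, G n i ≤ C * g i}).NeBot := frequently_mem_iff_neBot.1 hle
  have : l.NeBot := hne.mono inf_le_left
  have hg : Summable g := summable_of_sum_le (fun i => ge_of_tendsto' (hlim i) fun n => hG n i)
    fun u => le_of_tendsto' (tendsto_finsetSum u fun i _ => hlim i)
      fun n => sum_le_hasSum u (fun i _ => hG n i) (hsum n)
  have hbound : ∀ᶠ n in l ⊓ 𝓟 {n | ∀ i, G n i ≤ C * g i}, ∀ i, ‖G n i‖ ≤ C * g i :=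
    mem_inf_of_right fun n hn i => (Real.norm_of_nonneg (hG n i)).trans_le (hn i)
  have hdct := tendsto_tsum_of_dominated_convergence (hg.mul_left C)
    (fun i => (hlim i).mono_left inf_le_left) hbound
  simp only [(hsum _).tsum_eq] at hdct
  exact tendsto_nhds_unique hdct tendsto_const_nhds ▸ hg.hasSum

lemma exists_seq_rel_and_frequently {σ ι : Type*} [Countable ι] [Nonempty ι] {r : σ → σ → Prop}
    {Q : ι → σ → Prop} (hstep : ∀ i s, ∃ s', r s s' ∧ Q i s') (s₀ : σ) :
    ∃ u : ℕ → σ, u 0 = s₀ ∧ (∀ n, r (u n) (u (n + 1))) ∧ ∀ i, ∃ᶠ n in atTop, Q i (u n) := by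
  obtain ⟨e, he⟩ := exists_surjective_nat ι
  choose next hr hQ using hstep
  let u : ℕ → σ := fun n => Nat.rec s₀ (fun n s => next (e n.unpair.1) s) n
  refine ⟨u, rfl, fun n => hr _ _, fun i => frequently_atTop.2 fun m => ?_⟩
  obtain ⟨j, rfl⟩ := he i
  refine ⟨Nat.pair j m + 1, (Nat.right_le_pair j m).trans (Nat.le_succ _), ?_⟩
  convert hQ (e (Nat.pair j m).unpair.1) (u (Nat.pair j m))
  rw [Nat.unpair_pair]

namespace IsRefinable

variable {N : ℕ} {B : Finset ℤ} {f : ℝ → ℂ}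

lemma norm_maskProd_sq_le (hf : IsRefinable N B f) {K : ℕ} {A : Finset ℤ} {δ c : ℝ} (hc : 0 < c)
    (hA : IsTailBounded f N K A δ c) {ξ : ℝ} (hξ : |ξ / N ^ K| < δ) {a : ℤ} (ha : a ∈ A) :
    ‖maskProd N B K (ξ + a)‖ ^ 2 ≤ (c ^ 2)⁻¹ * ‖f (ξ + a)‖ ^ 2 := by
  have htail := hA a ha _ hξ
  rw [← add_div, add_comm] at htail
  rw [hf.eq_maskProd_mul K, norm_mul, mul_pow, inv_mul_eq_div, le_div_iff₀ (by positivity)]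
  gcongr

lemma hasSum_norm_sq (hf : IsRefinable N B f) (hN : 1 < N) {K : ℕ → ℕ} {A : ℕ → Finset ℤ}
    (hK : Tendsto K atTop atTop) (hA : Monotone A) (hlevel : ∀ n, IsLevelSpectrum N B (K n) (A n))
    {δ c : ℝ} (hδ : 0 < δ) (hc : 0 < c)
    (htail : ∃ᶠ n in atTop, IsTailBounded f N (K n) (A n) δ c) (ξ : ℝ) :
    HasSum (fun a : ⋃ n, (A n : Set ℤ) => ‖f (ξ + a)‖ ^ 2) 1 := by
  set Λ : Set ℤ := ⋃ n, (A n : Set ℤ)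
  have hsub (n : ℕ) : (A n : Set ℤ) ⊆ Λ := Set.subset_iUnion_of_subset n subset_rfl
  refine (hasSum_subtype_iff_indicator (f := fun a : ℤ => ‖f (ξ + a)‖ ^ 2)).2 ?_
  refine hasSum_of_tendsto_of_frequently_le (l := atTop) (C := (c ^ 2)⁻¹)
    (G := fun n => (A n : Set ℤ).indicator fun a => ‖maskProd N B (K n) (ξ + a)‖ ^ 2)
    (fun n a => Set.indicator_nonneg (fun _ _ => by positivity) a) (fun n => ?_) (fun a => ?_) ?_
  · rw [← hasSum_subtype_iff_indicator, ← hlevel n ξ]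
    exact (A n).hasSum fun a => ‖maskProd N B (K n) (ξ + a)‖ ^ 2
  · by_cases ha : a ∈ Λ
    · obtain ⟨m, hm⟩ := Set.mem_iUnion.1 ha
      rw [Set.indicator_of_mem ha]
      refine ((((hf.tendsto_maskProd hN (ξ + a)).comp hK).norm).pow 2).congr' ?_
      filter_upwards [eventually_ge_atTop m] with n hn
      rw [Set.indicator_of_mem (Finset.mem_coe.2 (hA hn hm)), Function.comp_apply]
    · simp only [Set.indicator_of_notMem ha, Set.indicator_of_notMem fun h => ha (hsub _ h)]
      exact tendsto_const_nhds
  · have hξ : ∀ᶠ n in atTop, |ξ / N ^ K n| < δ :=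
      ((tendsto_div_pow_atTop_nhds_zero (r := N) (mod_cast hN) ξ).abs.comp hK).eventually_lt_const
        (by simpa)
    refine (htail.and_eventually hξ).mono fun n hn a => ?_
    by_cases ha : a ∈ A n
    · rw [Set.indicator_of_mem (Finset.mem_coe.2 ha), Set.indicator_of_mem (hsub n ha)]
      exact hf.norm_maskProd_sq_le hc hn.1 hn.2 ha
    · rw [Set.indicator_of_notMem (Finset.mem_coe.not.2 ha)]
      exact mul_nonneg (by positivity) (Set.indicator_nonneg (fun _ _ => by positivity) a)

end IsRefinable

lemma IsHadamardTriple.exists_seq_isUniversalLevelSpectrum {N : ℕ} {B L : Finset ℤ} {f : ℝ → ℂ}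
    (h : IsHadamardTriple N B L) (h0 : 0 ∈ L) (hBN : B.card < N) (hf : IsRefinable N B f) :
    ∃ (K : ℕ → ℕ) (A : ℕ → Finset ℤ), A 0 = L ∧ StrictMono K ∧ Monotone A ∧
      (∀ n, IsUniversalLevelSpectrum N B (K n) (A n)) ∧
      ∀ w : ℕ, w.Coprime N → ∃ δ > 0, ∃ c > 0,
        ∃ᶠ n in atTop, IsTailBounded (fun x => f (w * x)) N (K n) (A n) δ c := by
  have hpos (w : {w : ℕ // w.Coprime N}) :
      ∃ δ > 0, ∃ c > 0, IsEquiPositive (fun x => f (w * x)) δ c := by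
    have hfw := hf.comp_mul (h.natCast_ne_zero w.2)
    exact exists_isEquiPositive hfw.continuous (by simp [hf.map_zero])
      (hfw.exists_map_add_intCast_ne_zero (h.image_mul_left w.2)
        (Finset.card_image_le.trans_lt hBN))
  choose δ hδ c hc hg using hpos
  have : Nonempty {w : ℕ // w.Coprime N} := ⟨1, Nat.coprime_one_left N⟩
  let State := {s : ℕ × Finset ℤ // IsUniversalLevelSpectrum N B s.1 s.2}
  have hstep (w : {w : ℕ // w.Coprime N}) (s : State) : ∃ s' : State,
      (s.1.1 < s'.1.1 ∧ s.1.2 ⊆ s'.1.2) ∧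
        IsTailBounded (fun x => f (w * x)) N s'.1.1 s'.1.2 (δ w) (c w) := by
    obtain ⟨K', A', hK', hA', hs', htail⟩ := s.2.exists_isTailBounded h h0 (hδ w) (hg w)
    exact ⟨⟨(K', A'), hs'⟩, ⟨hK', hA'⟩, htail⟩
  obtain ⟨u, hu0, hu, htail⟩ := exists_seq_rel_and_frequently hstep
    ⟨(1, L), fun w hw => (h.image_mul_left hw).isLevelSpectrum_one⟩
  exact ⟨fun n => (u n).1.1, fun n => (u n).1.2, by simp only [hu0],
    strictMono_nat_of_lt_succ fun n => (hu n).1, monotone_nat_of_le_succ fun n => (hu n).2,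
    fun n => (u n).2, fun w hw => ⟨_, hδ ⟨w, hw⟩, _, hc ⟨w, hw⟩, htail ⟨w, hw⟩⟩⟩

section Uniqueness

variable {E : Type*} [NormedAddCommGroup E] [InnerProductSpace ℝ E] [MeasurableSpace E]
  {μ : Measure E}

lemma charFun_withDensity_ofReal {h : E → ℝ} (hh : AEMeasurable h μ) (t : E) :
    charFun (μ.withDensity fun x => ENNReal.ofReal (h x)) t =
      ∫ x, (max (h x) 0 : ℝ) * Complex.exp (inner ℝ x t * Complex.I) ∂μ := by
  rw [charFun_apply, integral_withDensity_eq_integral_toReal_smul₀ hh.ennreal_ofReal (by simp)]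
  simp only [ENNReal.toReal_ofReal', Complex.real_smul]

variable [BorelSpace E] [SecondCountableTopology E]

lemma integrable_mul_exp_inner {g : E → ℂ} (hg : Integrable g μ) (t : E) :
    Integrable (fun x => g x * Complex.exp (inner ℝ x t * Complex.I)) μ :=
  hg.mul_bdd (c := 1) (by fun_prop) (by simp [Complex.norm_exp_ofReal_mul_I])

-- The positive and negative parts of `h` are the densities of two finite measures with the same
-- characteristic function.
lemma ae_eq_zero_of_integral_ofReal_mul_exp_eq_zero [CompleteSpace E] {h : E → ℝ}
    (hh : Integrable h μ)
    (h0 : ∀ t, ∫ x, (h x : ℂ) * Complex.exp (inner ℝ x t * Complex.I) ∂μ = 0) : h =ᵐ[μ] 0 := by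
  have hneg : Integrable (fun x => -h x) μ := hh.neg
  have := isFiniteMeasure_withDensity_ofReal hh.2
  have := isFiniteMeasure_withDensity_ofReal hneg.2
  have hpos_exp := integrable_mul_exp_inner (g := fun x => (max (h x) 0 : ℝ)) hh.pos_part.ofReal
  have hneg_exp := integrable_mul_exp_inner (g := fun x => (max (-h x) 0 : ℝ)) hh.neg_part.ofReal
  have hmeas : μ.withDensity (fun x => ENNReal.ofReal (h x)) =
      μ.withDensity fun x => ENNReal.ofReal (-h x) := by
    refine Measure.ext_of_charFun (funext fun t => ?_)
    rw [charFun_withDensity_ofReal hh.aemeasurable, charFun_withDensity_ofReal hneg.aemeasurable,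
      ← sub_eq_zero, ← integral_sub (hpos_exp t) (hneg_exp t), ← h0 t]
    refine integral_congr_ae (.of_forall fun x => ?_)
    dsimp only
    rw [← sub_mul, ← Complex.ofReal_sub, max_zero_sub_max_neg_zero_eq_self]
  filter_upwards [(withDensity_eq_iff hh.aemeasurable.ennreal_ofReal
    hneg.aemeasurable.ennreal_ofReal hh.lintegral_lt_top.ne).1 hmeas] with x hx
  have hmax := congrArg ENNReal.toReal hx
  rw [ENNReal.toReal_ofReal', ENNReal.toReal_ofReal'] at hmax
  rw [← max_zero_sub_max_neg_zero_eq_self (h x), hmax, sub_self, Pi.zero_apply]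

lemma ae_eq_zero_of_integral_mul_exp_eq_zero [CompleteSpace E] {g : E → ℂ} (hg : Integrable g μ)
    (h0 : ∀ t, ∫ x, g x * Complex.exp (inner ℝ x t * Complex.I) ∂μ = 0) : g =ᵐ[μ] 0 := by
  have hconj : Integrable (fun x => starRingEnd ℂ (g x)) μ :=
    (LinearIsometryEquiv.integrable_comp_iff Complex.conjLIE).2 hg
  have h0conj (t : E) :
      ∫ x, starRingEnd ℂ (g x) * Complex.exp (inner ℝ x t * Complex.I) ∂μ = 0 := by
    rw [← map_zero (starRingEnd ℂ), ← h0 (-t), ← integral_conj]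
    simp [← Complex.exp_conj]
  have hre : (fun x => (g x).re) =ᵐ[μ] 0 := by
    refine ae_eq_zero_of_integral_ofReal_mul_exp_eq_zero hg.re fun t => ?_
    simp only [Complex.re_eq_add_conj, div_mul_eq_mul_div, add_mul]
    rw [integral_div, integral_add (integrable_mul_exp_inner hg t)
      (integrable_mul_exp_inner hconj t), h0, h0conj, add_zero, zero_div]
  have him : (fun x => (g x).im) =ᵐ[μ] 0 := by
    refine ae_eq_zero_of_integral_ofReal_mul_exp_eq_zero hg.im fun t => ?_
    simp only [Complex.im_eq_sub_conj, div_mul_eq_mul_div, sub_mul]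
    rw [integral_div, integral_sub (integrable_mul_exp_inner hg t)
      (integrable_mul_exp_inner hconj t), h0, h0conj, sub_zero, zero_div]
  filter_upwards [hre, him] with x hx hy using Complex.ext hx hy

end Uniqueness

lemma charFun_two_pi_mul (μ : Measure ℝ) (ξ : ℝ) :
    charFun μ (2 * π * ξ) = ∫ x, (𝐞 (ξ * x) : ℂ) ∂μ := by
  rw [charFun_apply_real]
  simp only [Real.fourierChar_apply]
  push_cast
  simp only [mul_assoc]

lemma isRefinable_charFun {N : ℕ} {B : Finset ℤ} {μ : Measure ℝ} [IsProbabilityMeasure μ]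
    (hμ : μ = (B.card : ℝ≥0∞)⁻¹ •
      ∑ b ∈ B, Measure.map (fun x : ℝ => (x + (b : ℝ)) / (N : ℝ)) μ) :
    IsRefinable N B fun ξ => charFun μ (2 * π * ξ) where
  continuous := continuous_charFun.comp (continuous_const_mul _)
  map_zero := by simp
  map_eq ξ := by
    have hcont : Continuous fun x : ℝ => (𝐞 (ξ * x) : ℂ) := by fun_prop
    have hmap (b : ℤ) : ∫ x, (𝐞 (ξ * x) : ℂ) ∂(μ.map fun x : ℝ => (x + b) / N) =
        𝐞 (b * (ξ / N)) * charFun μ (2 * π * (ξ / N)) := by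
      rw [integral_map (by fun_prop) hcont.aestronglyMeasurable, charFun_two_pi_mul,
        ← integral_const_mul]
      refine integral_congr_ae (.of_forall fun x => ?_)
      dsimp only
      rw [← fourierChar_add]
      ring_nf
    have hint (b : ℤ) :
        Integrable (fun x => (𝐞 (ξ * x) : ℂ)) (μ.map fun x : ℝ => (x + b) / N) :=
      .of_bound hcont.aestronglyMeasurable 1 (.of_forall fun _ => (Circle.norm_coe _).le)
    rw [charFun_two_pi_mul]
    conv_lhs => rw [hμ]
    rw [integral_smul_measure, integral_finsetSum_measure fun b _ => hint b]
    simp only [hmap, ← Finset.sum_mul, mask]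
    simp [mul_assoc]

section Exponentials

variable (μ : Measure ℝ) [IsFiniteMeasure μ]

lemma memLp_expFun (l : ℝ) : MemLp (expFun l) 2 μ := by
  have hexp : expFun l = fun x => (𝐞 (l * x) : ℂ) := funext (expFun_eq_fourierChar l)
  rw [hexp]
  exact .of_bound (by fun_prop) 1 (.of_forall fun _ => (Circle.norm_coe _).le)

/-- The exponential `e^{2πilx}` as an element of `L²(μ)`. -/
noncomputable def expLp (l : ℝ) : Lp ℂ 2 μ := (memLp_expFun μ l).toLp (expFun l)

lemma coeFn_expLp (l : ℝ) : expLp μ l =ᵐ[μ] expFun l := (memLp_expFun μ l).coeFn_toLp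

lemma inner_expLp_left (l : ℝ) (g : Lp ℂ 2 μ) :
    inner ℂ (expLp μ l) g = ∫ x, g x * 𝐞 (-l * x) ∂μ := by
  rw [L2.inner_def]
  refine integral_congr_ae ?_
  filter_upwards [coeFn_expLp μ l] with x hx
  rw [hx, RCLike.inner_apply, expFun_eq_fourierChar, ← Circle.coe_inv_eq_conj,
    ← AddChar.map_neg_eq_inv, neg_mul]

lemma inner_expLp (a b : ℝ) :
    inner ℂ (expLp μ a) (expLp μ b) = charFun μ (2 * π * (b - a)) := by
  rw [inner_expLp_left, charFun_two_pi_mul]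
  refine integral_congr_ae ?_
  filter_upwards [coeFn_expLp μ b] with x hx
  rw [hx, expFun_eq_fourierChar, ← fourierChar_add, neg_mul, ← sub_eq_add_neg, ← sub_mul]

lemma topologicalClosure_span_range_expLp :
    (Submodule.span ℂ (Set.range (expLp μ))).topologicalClosure = ⊤ := by
  rw [Submodule.topologicalClosure_eq_top_iff, Submodule.eq_bot_iff]
  intro g hg
  rw [Lp.eq_zero_iff_ae_eq_zero]
  refine ae_eq_zero_of_integral_mul_exp_eq_zero ((Lp.memLp g).integrable one_le_two) fun t => ?_
  have hinner := (Submodule.mem_orthogonal _ g).1 hg _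
    (Submodule.subset_span ⟨-(t / (2 * π)), rfl⟩)
  rw [inner_expLp_left] at hinner
  rw [← hinner]
  refine integral_congr_ae (.of_forall fun x => ?_)
  dsimp only
  rw [Real.fourierChar_apply, neg_neg, ← mul_assoc, mul_div_cancel₀ _ Real.two_pi_pos.ne']
  rfl

end Exponentials

lemma norm_expLp (μ : Measure ℝ) [IsProbabilityMeasure μ] (l : ℝ) : ‖expLp μ l‖ = 1 := by
  rw [← sq_eq_sq₀ (norm_nonneg _) zero_le_one, norm_sq_eq_re_inner (𝕜 := ℂ), inner_expLp]
  simp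

lemma mem_topologicalClosure_span_of_hasSum {𝕜 E ι : Type*} [RCLike 𝕜] [NormedAddCommGroup E]
    [InnerProductSpace 𝕜 E] {v : ι → E} (hv : Orthonormal 𝕜 v) {x : E}
    (hx : HasSum (fun i => ‖inner 𝕜 (v i) x‖ ^ 2) (‖x‖ ^ 2)) :
    x ∈ (Submodule.span 𝕜 (Set.range v)).topologicalClosure := by
  let p (s : Finset ι) : E := ∑ i ∈ s, inner 𝕜 (v i) x • v i
  have hdist (s : Finset ι) : ‖x - p s‖ ^ 2 = ‖x‖ ^ 2 - ∑ i ∈ s, ‖inner 𝕜 (v i) x‖ ^ 2 := by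
    have hinner : inner 𝕜 x (p s) = (∑ i ∈ s, ‖inner 𝕜 (v i) x‖ ^ 2 : ℝ) := by
      simp only [p, inner_sum, inner_smul_right]
      simp only [← inner_conj_symm x, RCLike.mul_conj]
      push_cast
      rfl
    have hnorm : ‖p s‖ ^ 2 = ∑ i ∈ s, ‖inner 𝕜 (v i) x‖ ^ 2 := by
      rw [← RCLike.ofReal_inj (K := 𝕜), RCLike.ofReal_pow, ← inner_self_eq_norm_sq_to_K,
        hv.inner_sum]
      simp only [RCLike.conj_mul]
      push_cast
      rfl
    rw [norm_sub_sq (𝕜 := 𝕜), hinner, hnorm, RCLike.ofReal_re]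
    ring
  have hlim : Tendsto (fun s => ‖x - p s‖ ^ 2) atTop (𝓝 0) := by
    have h := hx.const_sub (‖x‖ ^ 2)
    rw [sub_self, SummationFilter.unconditional_filter] at h
    exact h.congr fun s => (hdist s).symm
  have hp : Tendsto p atTop (𝓝 x) := by
    rw [tendsto_iff_norm_sub_tendsto_zero]
    simpa [norm_sub_rev] using hlim.sqrt
  exact mem_closure_of_tendsto hp (.of_forall fun s => sum_mem fun i _ =>
    Submodule.smul_mem _ _ (Submodule.subset_span ⟨i, rfl⟩))

lemma isSpectrum_of_hasSum {μ : Measure ℝ} [IsProbabilityMeasure μ] {S : Set ℝ}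
    (h : ∀ ξ, HasSum (fun s : S => ‖charFun μ (2 * π * (ξ + s))‖ ^ 2) 1) : IsSpectrum μ S := by
  have horth : Orthonormal ℂ fun s : S => expLp μ s := by
    refine ⟨fun s => norm_expLp μ s, fun a b hab => ?_⟩
    have hle := sum_le_hasSum {a, b} (fun s _ => by positivity) (h (-a))
    rw [Finset.sum_pair hab] at hle
    dsimp only
    rw [inner_expLp, sub_eq_neg_add, ← norm_eq_zero, ← sq_eq_zero_iff]
    refine le_antisymm ?_ (by positivity)
    simpa using hle
  refine ⟨_, fun s => coeFn_expLp μ s, horth, ?_⟩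
  rw [eq_top_iff, ← topologicalClosure_span_range_expLp μ]
  refine Submodule.topologicalClosure_minimal _ (Submodule.span_le.2 ?_)
    (Submodule.isClosed_topologicalClosure _)
  rintro _ ⟨l, rfl⟩
  have hcoeff (s : S) : ‖inner ℂ (expLp μ s) (expLp μ l)‖ = ‖charFun μ (2 * π * (-l + s))‖ := by
    rw [norm_inner_symm, inner_expLp, sub_eq_neg_add]
  refine mem_topologicalClosure_span_of_hasSum horth ?_
  simpa only [hcoeff, norm_expLp, one_pow] using h (-l)

lemma exists_universal_spectrum {N : ℕ} {B L : Finset ℤ} (h : IsHadamardTriple N B L)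
    (hBN : B.card < N) {μ : Measure ℝ} [IsProbabilityMeasure μ]
    (hμ : μ = (B.card : ℝ≥0∞)⁻¹ •
      ∑ b ∈ B, Measure.map (fun x : ℝ => (x + (b : ℝ)) / (N : ℝ)) μ) :
    ∃ Λ : Set ℤ, 0 ∈ Λ ∧ (∃ z ∈ Λ, z ≠ 0) ∧
      ∀ w : ℕ, w.Coprime N → IsSpectrum μ ((fun a : ℤ => (w * a : ℝ)) '' Λ) := by
  obtain ⟨L, h0, h⟩ := h.exists_zero_mem
  have hf := isRefinable_charFun hμ
  obtain ⟨K, A, rfl, hK, hA, hlevel, htail⟩ := h.exists_seq_isUniversalLevelSpectrum h0 hBN hf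
  obtain ⟨z, hz, hz0⟩ := Finset.exists_mem_ne (h.card_eq ▸ h.two_le_card_left) 0
  refine ⟨⋃ n, (A n : Set ℤ), Set.mem_iUnion.2 ⟨0, h0⟩, ⟨z, Set.mem_iUnion.2 ⟨0, hz⟩, hz0⟩,
    fun w hw => isSpectrum_of_hasSum fun ξ => ?_⟩
  obtain ⟨δ, hδ, c, hc, htail⟩ := htail w hw
  have hw0 : (w : ℝ) ≠ 0 := mod_cast h.natCast_ne_zero hw
  have hsum := (hf.comp_mul (h.natCast_ne_zero hw)).hasSum_norm_sq h.two_le hK.tendsto_atTop hA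
    (fun n => hlevel n w hw) hδ hc htail (ξ / w)
  have hinj : Function.Injective fun a : ℤ => (w : ℝ) * a :=
    (mul_right_injective₀ hw0).comp Int.cast_injective
  refine (Equiv.Set.image _ _ hinj).hasSum_iff.1 (hsum.congr_fun fun a => ?_)
  simp [mul_add, mul_div_cancel₀ _ hw0]

lemma injOn_image_natCast_mul_intCast {Λ : Set ℤ} (hΛ : ∃ z ∈ Λ, z ≠ 0) :
    Set.InjOn (fun m : ℕ => (fun a : ℤ => (m * a : ℝ)) '' Λ) {m | 0 < m} := by
  obtain ⟨z, ⟨hz, hz0⟩, hmin⟩ :=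
    exists_minimalFor_of_wellFoundedLT (fun z : ℤ => z ∈ Λ ∧ z ≠ 0) Int.natAbs hΛ
  have hle {m n : ℕ} (hm : 0 < m)
      (hmn : (fun a : ℤ => (m * a : ℝ)) '' Λ = (fun a : ℤ => (n * a : ℝ)) '' Λ) : n ≤ m := by
    obtain ⟨z', hz', (heq : (n * z' : ℝ) = m * z)⟩ :
        (m * z : ℝ) ∈ (fun a : ℤ => (n * a : ℝ)) '' Λ :=
      hmn ▸ Set.mem_image_of_mem _ hz
    have hint : (n : ℤ) * z' = m * z := by exact_mod_cast heq
    have habs : n * z'.natAbs = m * z.natAbs := by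
      simpa [Int.natAbs_mul] using congrArg Int.natAbs hint
    have hz'0 : z' ≠ 0 := by
      rintro rfl
      simp [hz0, hm.ne'] at hint
    have hmin' : z.natAbs ≤ z'.natAbs := (le_total _ _).elim id (hmin ⟨hz', hz'0⟩)
    refine Nat.le_of_mul_le_mul_right ?_ (Int.natAbs_pos.2 hz0)
    exact (Nat.mul_le_mul_left n hmin').trans_eq habs
  exact fun m hm n hn hmn => (hle hn hmn.symm).antisymm (hle hm hmn)

lemma exists_common_denominator_of_mem_eigenSet {ι : Type*} [Finite ι] {N : ℕ} {t : ι → ℝ}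
    (ht : ∀ i, t i ∈ eigenSet N) :
    ∃ d : ℕ, 0 < d ∧ d.Coprime N ∧ ∀ i, ∃ w : ℕ, w.Coprime N ∧ t i * d = w := by
  have := Fintype.ofFinite ι
  choose u v hu _ _ huv ht using ht
  have hd : (∏ i, u i).Coprime N :=
    Nat.Coprime.prod_left fun i _ => (huv i).coprime_mul_right
  refine ⟨∏ i, u i, Finset.prod_pos fun i _ => hu i, hd, fun i => ?_⟩
  obtain ⟨q, hq⟩ := Finset.dvd_prod_of_mem u (Finset.mem_univ i)
  rw [hq] at hd ⊢
  refine ⟨v i * q, (huv i).coprime_mul_left.mul_left hd.coprime_mul_left, ?_⟩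
  have hui : (u i : ℝ) ≠ 0 := mod_cast (hu i).ne'
  rw [ht i]
  push_cast
  field_simp

lemma infinite_setOf_pos_coprime {N : ℕ} (hN : N ≠ 0) : {q : ℕ | 0 < q ∧ q.Coprime N}.Infinite :=
  Set.infinite_of_injective_forall_mem (f := fun j => N * j + 1)
    (fun _ _ hij => Nat.eq_of_mul_eq_mul_left (Nat.pos_of_ne_zero hN) (Nat.succ_injective hij))
    fun j => ⟨Nat.succ_pos _, by simp⟩

end

theorem eigen_subspace_infinite (N : ℕ) (B L : Finset ℤ)
    (h : IsHadamardTriple N B L) (hBN : B.card < N)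
    (μ : Measure ℝ) [IsProbabilityMeasure μ]
    (hμ : μ = (B.card : ℝ≥0∞)⁻¹ •
      ∑ b ∈ B, Measure.map (fun x : ℝ => (x + (b : ℝ)) / (N : ℝ)) μ)
    (k : ℕ) (t : Fin k → ℝ) (ht : ∀ i, t i ∈ eigenSet N) :
    { Λ : Set ℝ | (0 : ℝ) ∈ Λ ∧ IsSpectrum μ Λ ∧
        ∀ i, IsSpectrum μ ((fun x : ℝ => t i * x) '' Λ) }.Infinite := by
  obtain ⟨Λ, hΛ0, hΛ, hspec⟩ := exists_universal_spectrum h hBN hμ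
  obtain ⟨d, hd, hdN, hmul⟩ := exists_common_denominator_of_mem_eigenSet ht
  have hinj : Set.InjOn (fun q : ℕ => (fun a : ℤ => ((d * q : ℕ) * a : ℝ)) '' Λ)
      {q | 0 < q ∧ q.Coprime N} := fun q hq q' hq' hqq' =>
    Nat.eq_of_mul_eq_mul_left hd <|
      injOn_image_natCast_mul_intCast hΛ (Nat.mul_pos hd hq.1) (Nat.mul_pos hd hq'.1) hqq'
  refine Set.infinite_of_injOn_mapsTo hinj (fun q ⟨_, hq⟩ => ⟨?_, ?_, fun i => ?_⟩)
    (infinite_setOf_pos_coprime h.ne_zero)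
  · exact ⟨0, hΛ0, by simp⟩
  · exact hspec _ (hdN.mul_left hq)
  · obtain ⟨w, hw, htw⟩ := hmul i
    have hscale : t i * (d * q : ℕ) = (w * q : ℕ) := by
      rw [Nat.cast_mul d, ← mul_assoc, htw, Nat.cast_mul]
    simp only [Set.image_image, ← mul_assoc, hscale]
    exact hspec _ (hw.mul_left hq)
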